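/- Let n = 6 and let α_1, …, α_6 ∈ ℝ (indices mod 6) satisfy sin(α_{j+1} − α_j) ≠ 0 for all j, and suppose the opposite sides are parallel: α_{j+3} − α_j is an integer multiple of π for j = 1, 2, 3. Let P_θ be the associated 6×6 perpendicular-bisector evolute matrix. Then P_θ³ = −P_θ. Geometrically: for a hexagon with parallel opposite sides, the third perpendicular-bisector evolute coincides with the first one, i.e. the first and second P-evolutes are each other's evolutes. -/

import Mathlib

open Real

/-- The perpendicular-bisector evolute matrix `P_θ` associated with the cyclic
sequence of normal angles `α`. -/
noncomputable def Pmat (n : ℕ) [NeZero n] (α : Fin n → ℝ) : Matrix (Fin n) (Fin n) ℝ :=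
  Matrix.of fun j k =>
    if k = j then
      (Real.cos (α j - α (j - 1)) / Real.sin (α j - α (j - 1)) -
        Real.cos (α (j + 1) - α j) / Real.sin (α (j + 1) - α j)) / 2
    else if k = j + 1 then 1 / (2 * Real.sin (α (j + 1) - α j))
    else if k = j - 1 then -(1 / (2 * Real.sin (α j - α (j - 1))))
    else 0

set_option maxHeartbeats 4000000 in
/-- Purely algebraic core: `x, y, z` are the cosecants and `p, q, r` the cotangents. -/
theorem hex_core (x y z p q r e f g : ℝ)
    (he : e ^ 2 = 1) (hf : f ^ 2 = 1) (hg : g ^ 2 = 1)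
    (hx : x ^ 2 = 1 + p ^ 2) (hy : y ^ 2 = 1 + q ^ 2) (hz : z ^ 2 = 1 + r ^ 2)
    (hxy : x * y = -(z * (p + q))) (hyz : y * z = -(x * (q + r)))
    (hzx : z * x = -(y * (r + p))) (hpq : p * q + q * r + r * p = 1)
    (M : Matrix (Fin 6) (Fin 6) ℝ)
    (hM : M = !![r - p, x, 0, 0, 0, -(g * z);
                -x, p - q, y, 0, 0, 0;
                0, -y, q - r, e * z, 0, 0;
                0, 0, -(e * z), r - p, e * f * x, 0;
                0, 0, 0, -(e * f * x), p - q, f * g * y;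
                g * z, 0, 0, 0, -(f * g * y), q - r]) :
    M * M * M = (-4 : ℝ) • M := by
  subst hM
  ext i j
  fin_cases i <;> fin_cases j <;>
    simp [Matrix.mul_apply, Fin.sum_univ_succ] <;> grind

/-- For a hexagon with parallel opposite sides
(`α_{j+3} − α_j ∈ πℤ`), the perpendicular-bisector evolute matrix satisfies
`P_θ³ = −P_θ`: the third P-evolute coincides with the first one, i.e. the first
and second P-evolutes are each other's evolutes. -/
theorem stmt_14 (α : Fin 6 → ℝ)
    (hsin : ∀ j : Fin 6, Real.sin (α (j + 1) - α j) ≠ 0)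
    (hpar : ∀ j : Fin 6, ∃ k : ℤ, α (j + 3) - α j = k * Real.pi) :
    (Pmat 6 α) ^ 3 = -(Pmat 6 α) := by
  obtain ⟨k0, h0⟩ := hpar 0
  obtain ⟨k1, h1⟩ := hpar 1
  obtain ⟨k2, h2⟩ := hpar 2
  have s0 := hsin 0
  have s1 := hsin 1
  have s2 := hsin 2
  have s3 := hsin 3
  have s4 := hsin 4
  have s5 := hsin 5
  simp only [show (0:Fin 6)+3=3 from rfl, show (1:Fin 6)+3=4 from rfl, show (2:Fin 6)+3=5 from rfl] at h0 h1 h2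
  simp only [show (0:Fin 6)+1=1 from rfl, show (1:Fin 6)+1=2 from rfl, show (2:Fin 6)+1=3 from rfl,
    show (3:Fin 6)+1=4 from rfl, show (4:Fin 6)+1=5 from rfl, show (5:Fin 6)+1=0 from rfl] at s0 s1 s2 s3 s4 s5
  have key : ∀ k : ℤ, ∃ e : ℝ, e ^ 2 = 1 ∧ ∀ t, Real.sin (t + k * π) = e * Real.sin t ∧
      Real.cos (t + k * π) = e * Real.cos t := by
    intro k
    refine ⟨(-1 : ℝ) ^ k, ?_, fun t => ⟨Real.sin_add_int_mul_pi t k, Real.cos_add_int_mul_pi t k⟩⟩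
    rcases Int.even_or_odd k with h | h
    · simp [h.neg_one_zpow]
    · simp [h.neg_one_zpow]
  obtain ⟨e, he, hE⟩ := key k0
  obtain ⟨f, hf, hF⟩ := key k1
  obtain ⟨g, hg, hG⟩ := key k2
  obtain ⟨A, hA⟩ : ∃ A, A = α 1 - α 0 := ⟨_, rfl⟩
  obtain ⟨B, hB⟩ : ∃ B, B = α 2 - α 1 := ⟨_, rfl⟩
  obtain ⟨C, hC⟩ : ∃ C, C = α 0 - α 2 := ⟨_, rfl⟩
  have t23 : α 3 - α 2 = C + k0 * π := by linarith
  have t34 : α 4 - α 3 + k0 * π = A + k1 * π := by linarith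
  have t45 : α 5 - α 4 + k1 * π = B + k2 * π := by linarith
  have t50 : α 0 - α 5 + k2 * π = C := by linarith
  have S23 : sin (α 3 - α 2) = e * sin C := by rw [t23, (hE _).1]
  have C23 : cos (α 3 - α 2) = e * cos C := by rw [t23, (hE _).2]
  have S34 : sin (α 4 - α 3) = e * f * sin A := by
    have := congrArg sin t34
    rw [(hE _).1, (hF _).1] at this
    linear_combination e * this - sin (α 4 - α 3) * he
  have C34 : cos (α 4 - α 3) = e * f * cos A := by
    have := congrArg cos t34
    rw [(hE _).2, (hF _).2] at this
    linear_combination e * this - cos (α 4 - α 3) * he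
  have S45 : sin (α 5 - α 4) = f * g * sin B := by
    have := congrArg sin t45
    rw [(hF _).1, (hG _).1] at this
    linear_combination f * this - sin (α 5 - α 4) * hf
  have C45 : cos (α 5 - α 4) = f * g * cos B := by
    have := congrArg cos t45
    rw [(hF _).2, (hG _).2] at this
    linear_combination f * this - cos (α 5 - α 4) * hf
  have S50 : sin (α 0 - α 5) = g * sin C := by
    have := congrArg sin t50
    rw [(hG _).1] at this
    linear_combination g * this - sin (α 0 - α 5) * hg
  have C50 : cos (α 0 - α 5) = g * cos C := by
    have := congrArg cos t50
    rw [(hG _).2] at this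
    linear_combination g * this - cos (α 0 - α 5) * hg
  rw [S23] at s2
  rw [← hA] at s0
  rw [← hB] at s1
  have sC : sin C ≠ 0 := right_ne_zero_of_mul s2
  have e0 : e ≠ 0 := left_ne_zero_of_mul s2
  have f0 : f ≠ 0 := by rintro rfl; norm_num at hf
  have g0 : g ≠ 0 := by rintro rfl; norm_num at hg
  have ei : e⁻¹ = e := by field_simp; linarith
  have fi : f⁻¹ = f := by field_simp; linarith
  have gi : g⁻¹ = g := by field_simp; linarith
  have hCAB : C = -(A + B) := by linarith
  have sCe : sin C = -(sin A * cos B + cos A * sin B) := by rw [hCAB, sin_neg, sin_add]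
  have cCe : cos C = cos A * cos B - sin A * sin B := by rw [hCAB, cos_neg, cos_add]
  have pA := sin_sq_add_cos_sq A
  have pB := sin_sq_add_cos_sq B
  have pC := sin_sq_add_cos_sq C
  have core := hex_core (sin A)⁻¹ (sin B)⁻¹ (sin C)⁻¹ (cos A / sin A) (cos B / sin B)
    (cos C / sin C) e f g he hf hg (by field_simp; linarith) (by field_simp; linarith)
    (by field_simp; linarith) (by field_simp; grind) (by field_simp; grind)
    (by field_simp; grind) (by field_simp; grind) ((2:ℝ) • Pmat 6 α) (by
      ext i j
      rw [Matrix.smul_apply, Pmat, Matrix.of_apply]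
      fin_cases i <;> fin_cases j <;>
      simp [show (0:Fin 6)-1=5 from rfl, show (1:Fin 6)+1=2 from rfl, show (2:Fin 6)+1=3 from rfl,
        show (3:Fin 6)+1=4 from rfl, show (4:Fin 6)+1=5 from rfl, show (5:Fin 6)+1=0 from rfl,
        show (2:Fin 6)-1=1 from rfl, show (3:Fin 6)-1=2 from rfl, show (4:Fin 6)-1=3 from rfl,
        show (5:Fin 6)-1=4 from rfl, mul_div_mul_left _ _ e0, mul_div_mul_left _ _ g0,
        mul_div_mul_left _ _ (mul_ne_zero e0 f0), mul_div_mul_left _ _ (mul_ne_zero f0 g0),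
        C23, C34, C45, C50, ← hA, ← hB,
        S23, S34, S45, S50, ei, fi, gi] <;> ring)
  have h8 : (8:ℝ) • (Pmat 6 α) ^ 3 = (8:ℝ) • (-(Pmat 6 α)) := by
    rw [pow_three']
    simp only [smul_mul_assoc, mul_smul_comm, smul_smul] at core
    rw [smul_neg, ← neg_smul]
    convert core using 2 <;> norm_num
  exact smul_right_injective _ (by norm_num : (8:ℝ) ≠ 0) h8
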